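/- Let k be a perfect field of characteristic p > 0, and let A and B be domains that are strongly F-regular k-algebras of finite type. If the tensor product A ⊗_k B is a domain, then A ⊗_k B is strongly F-regular. -/

import Mathlib

/-!
STATEMENT 10.  Let `k` be a perfect field of characteristic `p > 0`, and let `A` and `B` be
domains that are strongly `F`-regular `k`-algebras of finite type.  If the tensor product
`A ⊗_k B` is a domain, then `A ⊗_k B` is strongly `F`-regular.

Strong `F`-regularity is taken in the sense of Hochster–Huneke: for every `c` not in any
minimal prime there exist `q = p^e` and an `R`-linear map `F^e_* R → R` sending `c` to `1`
(for `F`-finite reduced rings — and a finitely generated algebra over a perfect field is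
`F`-finite — this is the splitting of the inclusion `R·c^{1/q} ⊆ R^{1/q}` as `R`-modules).
We render an `R`-linear map `F^e_* R → R` as an additive map `φ : R → R` with
`φ(r^{p^e} · x) = r · φ(x)`.
-/

/-- A commutative ring `R` of characteristic `p` is strongly `F`-regular (Hochster–Huneke) if
for every `c` not in any minimal prime there are `e ∈ ℕ` and an additive map `φ : R → R` that
is `R`-linear for the `e`-th Frobenius twist (i.e. `φ(r^{p^e} x) = r φ(x)`, an `R`-linear map
`F^e_* R → R`) with `φ(c) = 1`. -/
def StronglyFRegular (p : ℕ) (R : Type*) [CommRing R] : Prop :=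
  ∀ c : R, (∀ P ∈ minimalPrimes R, c ∉ P) →
    ∃ (e : ℕ) (φ : R →+ R), (∀ r x : R, φ (r ^ p ^ e * x) = r * φ x) ∧ φ c = 1

/-!
The ideals `J e = {φ c | φ : F^e_* R → R}` of `R = A ⊗ B` increase with `e`, because `R` inherits a
Frobenius splitting from `A` and `B`. Suppose none of them meets the multiplicative set `T` of pure
tensors `a ⊗ b` with `a, b ≠ 0`. Being eventually constant, they all lie in one prime `P` disjoint
from `T`. Now `F^e_* A` and `F^e_* B` are generically free, so they have finite dual bases up to
nonzero scalars; tensoring these gives `t ∈ T` with `t c ∈ (J e) ^ [p ^ e] ⊆ P ^ (p ^ e)`. By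
Krull's intersection theorem `c` vanishes in `R_P` and so lies in a minimal prime, contrary to the
choice of `c`.

Hence some `φ c` is a pure tensor `a ⊗ b`. A tensor product of `p⁻ᵉ`-linear maps on `A` and `B`
sending `a` and `b` to `1` finishes; it exists over a perfect field because such maps are semilinear
for the inverse of the `e`-th Frobenius of `k`.
-/

open scoped TensorProduct nonZeroDivisors

section GenericFreeness

variable {R M ι : Type*} [CommRing R] [IsDomain R] [AddCommGroup M] [Module R M]

theorem exists_linearIndepOn_forall_smul_mem_span [Finite ι] {v : ι → M}
    (hv : Submodule.span R (Set.range v) = ⊤) :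
    ∃ s : Set ι, LinearIndepOn R v s ∧
      ∃ r : R, r ≠ 0 ∧ ∀ x : M, r • x ∈ Submodule.span R (v '' s) := by
  classical
  have := Fintype.ofFinite ι
  obtain ⟨s, hs, hmax⟩ := exists_maximal_linearIndepOn R v
  have hgen (i : ι) : ∃ a : R, a ≠ 0 ∧ a • v i ∈ Submodule.span R (v '' s) := by
    by_cases hi : i ∈ s
    · exact ⟨1, one_ne_zero, (one_smul R (v i)).symm ▸
        Submodule.subset_span (Set.mem_image_of_mem v hi)⟩
    · exact hmax i hi
  choose a ha hav using hgen
  refine ⟨s, hs, ∏ i, a i, Finset.prod_ne_zero_iff.mpr fun i _ => ha i, fun x => ?_⟩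
  have hle : Submodule.span R (Set.range v) ≤
      (Submodule.span R (v '' s)).comap (LinearMap.lsmul R M (∏ i, a i)) := by
    rw [Submodule.span_le]
    rintro _ ⟨i, rfl⟩
    rw [SetLike.mem_coe, Submodule.mem_comap, LinearMap.lsmul_apply,
      ← Finset.prod_erase_mul _ _ (Finset.mem_univ i), mul_smul]
    exact Submodule.smul_mem _ _ (hav i)
  exact hle (hv ▸ Submodule.mem_top)

variable (R M) in
theorem exists_smul_eq_sum_smul_of_finite [Module.Finite R M] :
    ∃ (ι : Type) (_ : Fintype ι) (u : ι → M) (π : ι → M →ₗ[R] R) (r : R), r ≠ 0 ∧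
      ∀ x, r • x = ∑ i, π i x • u i := by
  classical
  obtain ⟨n, v, hv⟩ := Module.Finite.exists_fin (R := R) (M := M)
  obtain ⟨s, hs, r, hr, hrx⟩ := exists_linearIndepOn_forall_smul_mem_span hv
  rw [Set.image_eq_range] at hrx
  let scale : M →ₗ[R] Submodule.span R (Set.range fun i : s => v i) :=
    (LinearMap.lsmul R M r).codRestrict _ hrx
  let coords : M →ₗ[R] s →₀ R := hs.linearIndependent.repr ∘ₗ scale
  refine ⟨s, inferInstance, fun i => v i, fun i => Finsupp.lapply i ∘ₗ coords, r, hr, fun x => ?_⟩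
  calc r • x = Finsupp.linearCombination R (fun i : s => v i) (coords x) :=
        (hs.linearIndependent.linearCombination_repr (scale x)).symm
    _ = ∑ i, coords x i • v i := by
        rw [Finsupp.linearCombination_apply]
        exact Finsupp.sum_fintype _ _ fun i => zero_smul R (v i)

theorem exists_dualBasis_of_ringHom_finite {S : Type*} [CommRing S] {f : R →+* S}
    (hf : f.Finite) :
    ∃ (ι : Type) (_ : Fintype ι) (u : ι → S) (π : ι → S →+ R) (r : R), r ≠ 0 ∧
      (∀ i a x, π i (f a * x) = a * π i x) ∧ ∀ x, f r * x = ∑ i, f (π i x) * u i := by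
  let _ : Algebra R S := f.toAlgebra
  have : Module.Finite R S := hf
  obtain ⟨ι, _, u, π, r, hr, h⟩ := exists_smul_eq_sum_smul_of_finite R S
  exact ⟨ι, inferInstance, u, fun i => (π i).toAddMonoidHom, r, hr,
    fun i a x => (π i).map_smul a x, h⟩

end GenericFreeness

theorem exists_mem_minimalPrimes_of_forall_mul_mem_pow {R : Type*} [CommRing R]
    [IsNoetherianRing R] (P : Ideal R) [P.IsPrime] {c : R}
    (h : ∀ n : ℕ, ∃ t ∉ P, t * c ∈ P ^ n) : ∃ Q ∈ minimalPrimes R, c ∈ Q := by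
  let L := Localization.AtPrime P
  have : IsNoetherianRing L := IsLocalization.isNoetherianRing P.primeCompl L inferInstance
  have hmem (n : ℕ) : algebraMap R L c ∈ IsLocalRing.maximalIdeal L ^ n := by
    obtain ⟨t, ht, htc⟩ := h n
    have hunit : IsUnit (algebraMap R L t) := IsLocalization.map_units L (⟨t, ht⟩ : P.primeCompl)
    rw [← Ideal.unit_mul_mem_iff_mem _ hunit, ← map_mul,
      ← Localization.AtPrime.map_eq_maximalIdeal, ← Ideal.map_pow]
    exact Ideal.mem_map_of_mem _ htc
  have hzero : algebraMap R L c = 0 := by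
    rw [← Ideal.mem_bot, ← Ideal.iInf_pow_eq_bot_of_isLocalRing (IsLocalRing.maximalIdeal L)
      Ideal.IsPrime.ne_top', Ideal.mem_iInf]
    exact hmem
  obtain ⟨⟨m, hm⟩, hmc⟩ := (IsLocalization.map_eq_zero_iff P.primeCompl L c).mp hzero
  obtain ⟨Q, hQ, hQP⟩ := Ideal.exists_minimalPrimes_le (bot_le : ⊥ ≤ P)
  have hQprime : Q.IsPrime := hQ.1.1
  have hmcQ : m * c ∈ Q := hmc ▸ Q.zero_mem
  exact ⟨Q, hQ, (hQprime.mem_or_mem hmcQ).resolve_left fun hmQ => hm (hQP hmQ)⟩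

section CartierMaps

/-- The module `Hom_R(F^e_* R, R)` of `p⁻ᵉ`-linear maps on `R`. As in `StronglyFRegular`, a map
`F^e_* R → R` is an additive map `φ` on `R` with `φ (r ^ p ^ e * x) = r * φ x`; the scalar
multiplication is the one on the target. -/
def cartierMaps (p e : ℕ) (R : Type*) [CommRing R] : Submodule R (R →+ R) where
  carrier := {φ | ∀ r x : R, φ (r ^ p ^ e * x) = r * φ x}
  zero_mem' r _ := (mul_zero r).symm
  add_mem' hφ hψ r x := by
    rw [AddMonoidHom.add_apply, AddMonoidHom.add_apply, hφ, hψ, mul_add]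
  smul_mem' a φ hφ r x := by
    rw [AddMonoidHom.smul_apply, AddMonoidHom.smul_apply, hφ, smul_eq_mul, smul_eq_mul,
      mul_left_comm]

/-- The image of `c` under evaluation `Hom_R(F^e_* R, R) → R`: it is the unit ideal exactly when
some `p⁻ᵉ`-linear map sends `c` to `1`. -/
def cartierIdeal (p e : ℕ) {R : Type*} [CommRing R] (c : R) : Ideal R where
  carrier := {r | ∃ φ ∈ cartierMaps p e R, φ c = r}
  zero_mem' := ⟨0, zero_mem _, rfl⟩
  add_mem' := by
    rintro _ _ ⟨φ, hφ, rfl⟩ ⟨ψ, hψ, rfl⟩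
    exact ⟨φ + ψ, add_mem hφ hψ, rfl⟩
  smul_mem' := by
    rintro a _ ⟨φ, hφ, rfl⟩
    exact ⟨a • φ, Submodule.smul_mem _ a hφ, rfl⟩

/-- `R` is Frobenius split: the inclusion `R → F_* R` has an `R`-linear retraction. -/
def FrobeniusSplit (p : ℕ) (R : Type*) [CommRing R] : Prop :=
  ∃ σ ∈ cartierMaps p 1 R, σ 1 = 1

/-- `F^e_* R` has a finite dual basis up to the scalar `t ∈ F^e_* R`: coordinates `π i` and vectors
`u i` expressing multiplication by `t`. For `t = 1` it says that `F^e_* R` is finite projective. -/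
def HasFrobeniusDualBasis (p e : ℕ) {R : Type*} [CommRing R] (t : R) : Prop :=
  ∃ (ι : Type) (_ : Fintype ι) (u : ι → R) (π : ι → R →+ R),
    (∀ i, π i ∈ cartierMaps p e R) ∧ ∀ x, t * x = ∑ i, π i x ^ p ^ e * u i

variable {p e e' : ℕ} {R : Type*} [CommRing R]

theorem comp_mem_cartierMaps {φ ψ : R →+ R} (hφ : φ ∈ cartierMaps p e R)
    (hψ : ψ ∈ cartierMaps p e' R) : φ.comp ψ ∈ cartierMaps p (e + e') R := by
  intro r x
  rw [AddMonoidHom.comp_apply, pow_add, pow_mul, hψ, hφ, AddMonoidHom.comp_apply]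

theorem comp_mulLeft_mem_cartierMaps {φ : R →+ R} (hφ : φ ∈ cartierMaps p e R) (a : R) :
    φ.comp (AddMonoidHom.mulLeft a) ∈ cartierMaps p e R := by
  intro r x
  rw [AddMonoidHom.comp_apply, AddMonoidHom.coe_mulLeft, mul_left_comm, hφ,
    AddMonoidHom.comp_apply, AddMonoidHom.coe_mulLeft]

theorem FrobeniusSplit.monotone_cartierIdeal (hR : FrobeniusSplit p R) (hp : p ≠ 0) (c : R) :
    Monotone fun e => cartierIdeal p e c := by
  obtain ⟨σ, hσ, hσ1⟩ := hR
  refine monotone_nat_of_le_succ fun e => ?_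
  intro r hr
  obtain ⟨φ, hφ, rfl⟩ := hr
  refine ⟨(σ.comp (AddMonoidHom.mulLeft (φ c ^ (p - 1)))).comp φ, ?_, ?_⟩
  · rw [add_comm]
    exact comp_mem_cartierMaps (comp_mulLeft_mem_cartierMaps hσ _) hφ
  · calc σ (φ c ^ (p - 1) * φ c) = σ (φ c ^ p ^ 1 * 1) := by
          rw [pow_sub_one_mul hp, pow_one, mul_one]
      _ = φ c := by rw [hσ, hσ1, mul_one]

theorem HasFrobeniusDualBasis.mul_mem_cartierIdeal_pow {t : R}
    (ht : HasFrobeniusDualBasis p e t) (x : R) : t * x ∈ cartierIdeal p e x ^ p ^ e := by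
  obtain ⟨ι, _, u, π, hπ, h⟩ := ht
  have hmem (i : ι) : π i x ∈ cartierIdeal p e x := ⟨π i, hπ i, rfl⟩
  rw [h]
  exact Ideal.sum_mem _ fun i _ => Ideal.mul_mem_right _ _ (Ideal.pow_mem_pow (hmem i) _)

theorem HasFrobeniusDualBasis.exists_cartierMap_apply_ne_zero {t a : R}
    (ht : HasFrobeniusDualBasis p e t) (hp : p ≠ 0) (ha : t * a ≠ 0) :
    ∃ φ ∈ cartierMaps p e R, φ a ≠ 0 := by
  obtain ⟨ι, _, u, π, hπ, h⟩ := ht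
  contrapose! ha
  rw [h]
  exact Finset.sum_eq_zero fun i _ => by
    rw [ha _ (hπ i), zero_pow (pow_ne_zero e hp), zero_mul]

theorem exists_cartierMap_apply_mem [IsNoetherianRing R] (hp : 1 < p) (hR : FrobeniusSplit p R)
    (T : Submonoid R) (hT : ∀ e, ∃ t ∈ T, HasFrobeniusDualBasis p e t) {c : R}
    (hc : ∀ P ∈ minimalPrimes R, c ∉ P) : ∃ e, ∃ φ ∈ cartierMaps p e R, φ c ∈ T := by
  by_contra! hcT
  have hmono := hR.monotone_cartierIdeal (Nat.ne_zero_of_lt hp) c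
  obtain ⟨n, hn⟩ := WellFoundedGT.monotone_chain_condition ⟨_, hmono⟩
  have hdisj : Disjoint (cartierIdeal p n c : Set R) T := by
    rw [Set.disjoint_left]
    rintro _ ⟨φ, hφ, rfl⟩
    exact hcT n φ hφ
  obtain ⟨P, hP, hnP, hPT⟩ := Ideal.exists_le_prime_disjoint _ T hdisj
  have hle (e : ℕ) : cartierIdeal p e c ≤ P :=
    calc cartierIdeal p e c ≤ cartierIdeal p (max n e) c := hmono (le_max_right n e)
      _ = cartierIdeal p n c := (hn _ (le_max_left n e)).symm
      _ ≤ P := hnP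
  obtain ⟨Q, hQ, hcQ⟩ := exists_mem_minimalPrimes_of_forall_mul_mem_pow P (c := c) fun e => by
    obtain ⟨t, htT, ht⟩ := hT e
    refine ⟨t, fun htP => Set.disjoint_left.mp hPT htP htT, ?_⟩
    exact Ideal.pow_le_pow_right (Nat.lt_pow_self hp).le
      (Ideal.pow_right_mono (hle e) _ (ht.mul_mem_cartierIdeal_pow c))
  exact hc Q hQ hcQ

end CartierMaps

section FFinite

/-- `R` is `F`-finite: it has exponential characteristic `p` (a part of the notion here, so that its
Frobenius can be named), and `R` is finite over itself through the Frobenius. -/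
def FFinite (p : ℕ) (R : Type*) [CommRing R] : Prop :=
  ∃ _ : ExpChar R p, (frobenius R p).Finite

variable {p : ℕ} {R : Type*} [CommRing R]

theorem FFinite.of_finiteType (k : Type*) [Field k] [ExpChar k p] [PerfectRing k p]
    [Nontrivial R] [Algebra k R] [Algebra.FiniteType k R] : FFinite p R := by
  have : ExpChar R p := expChar_of_injective_algebraMap (algebraMap k R).injective p
  refine ⟨this, RingHom.IsIntegral.to_finite (fun x => ?_) ?_⟩
  · exact ⟨Polynomial.X ^ p - Polynomial.C x,
      Polynomial.monic_X_pow_sub_C x (expChar_pos R p).ne', by simp [frobenius_def]⟩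
  · apply RingHom.FiniteType.of_comp_finiteType (f := algebraMap k R)
    rw [← RingHom.frobenius_comm]
    exact (RingHom.finiteType_algebraMap.mpr inferInstance).comp
      (RingHom.FiniteType.of_surjective _ (bijective_frobenius k p).2)

theorem iterateFrobenius_finite [ExpChar R p] (hR : (frobenius R p).Finite) (e : ℕ) :
    (iterateFrobenius R p e).Finite := by
  induction e with
  | zero => rw [iterateFrobenius_zero]; exact RingHom.Finite.id R
  | succ e ih => rw [iterateFrobenius_add, iterateFrobenius_one]; exact ih.comp hR

theorem FFinite.exists_hasFrobeniusDualBasis [IsDomain R] (hR : FFinite p R) (e : ℕ) :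
    ∃ t : R, t ≠ 0 ∧ HasFrobeniusDualBasis p e t := by
  obtain ⟨_, hfin⟩ := hR
  obtain ⟨ι, _, u, π, r, hr, hπ, h⟩ :=
    exists_dualBasis_of_ringHom_finite (iterateFrobenius_finite hfin e)
  exact ⟨r ^ p ^ e, pow_ne_zero _ hr, ι, inferInstance, u, π, hπ, h⟩

end FFinite

section StronglyFRegular

variable {p e : ℕ} {R : Type*} [CommRing R]

theorem frobeniusSplit_of_one_mem_cartierIdeal [ExpChar R p] {a : R}
    (ha : 1 ∈ cartierIdeal p (e + 1) a) : FrobeniusSplit p R := by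
  obtain ⟨φ, hφ, hφa⟩ := ha
  refine ⟨(φ.comp (AddMonoidHom.mulLeft a)).comp (iterateFrobenius R p e).toAddMonoidHom,
    fun r x => ?_, ?_⟩
  · calc φ (a * (r ^ p ^ 1 * x) ^ p ^ e) = φ (r ^ p ^ (e + 1) * (a * x ^ p ^ e)) := by ring_nf
      _ = r * φ (a * x ^ p ^ e) := hφ _ _
  · simp [hφa]

variable [IsDomain R]

theorem StronglyFRegular.exists_one_mem_cartierIdeal (hR : StronglyFRegular p R)
    (hF : FFinite p R) {a : R} (ha : a ≠ 0) : ∃ e, 1 ∈ cartierIdeal p (e + 1) a := by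
  obtain ⟨t, ht, hdual⟩ := hF.exists_hasFrobeniusDualBasis 1
  obtain ⟨_, -⟩ := hF
  obtain ⟨θ, hθ, hθa⟩ :=
    hdual.exists_cartierMap_apply_ne_zero (expChar_pos R p).ne' (mul_ne_zero ht ha)
  obtain ⟨e, ψ, hψ, hψθ⟩ := hR (θ a) fun P hP => by
    rw [IsDomain.minimalPrimes_eq_singleton_bot, Set.mem_singleton_iff] at hP
    rwa [hP, Ideal.mem_bot]
  exact ⟨e, ψ.comp θ, comp_mem_cartierMaps hψ hθ, hψθ⟩

theorem StronglyFRegular.frobeniusSplit (hR : StronglyFRegular p R) (hF : FFinite p R) :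
    FrobeniusSplit p R := by
  obtain ⟨e, he⟩ := hR.exists_one_mem_cartierIdeal hF one_ne_zero
  obtain ⟨_, -⟩ := hF
  exact frobeniusSplit_of_one_mem_cartierIdeal he

end StronglyFRegular

section TensorProduct

variable {p e : ℕ} {k A B : Type*} [CommRing k] [ExpChar k p] [PerfectRing k p]
  [CommRing A] [CommRing B] [Algebra k A] [Algebra k B] [ExpChar (A ⊗[k] B) p]

theorem exists_cartierMap_tmul {φ : A →+ A} {ψ : B →+ B} (hφ : φ ∈ cartierMaps p e A)
    (hψ : ψ ∈ cartierMaps p e B) :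
    ∃ χ ∈ cartierMaps p e (A ⊗[k] B), ∀ a b, χ (a ⊗ₜ b) = φ a ⊗ₜ ψ b := by
  let f : A →+ B →+ A ⊗[k] B :=
    AddMonoidHom.mk' (fun a => (TensorProduct.mk k A B (φ a)).toAddMonoidHom.comp ψ)
      fun a a' => by ext; simp
  have hbalanced (r : k) (a : A) (b : B) : f (r • a) b = f a (r • b) := by
    obtain ⟨s, rfl⟩ := (bijective_iterateFrobenius k p e).2 r
    change φ (iterateFrobenius k p e s • a) ⊗ₜ[k] ψ b =
      φ a ⊗ₜ[k] ψ (iterateFrobenius k p e s • b)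
    rw [iterateFrobenius_def, Algebra.smul_def, Algebra.smul_def, map_pow, map_pow, hφ, hψ,
      ← Algebra.smul_def, ← Algebra.smul_def, TensorProduct.smul_tmul]
  let χ : A ⊗[k] B →+ A ⊗[k] B := TensorProduct.liftAddHom f hbalanced
  have hχ (a : A) (b : B) : χ (a ⊗ₜ b) = φ a ⊗ₜ ψ b := TensorProduct.liftAddHom_tmul _ _ _ _
  refine ⟨χ, fun r x => ?_, hχ⟩
  induction r with
  | zero => simp [zero_pow (pow_ne_zero e (expChar_pos k p).ne')]
  | add r s hr hs => rw [add_pow_expChar_pow, add_mul, map_add, hr, hs, add_mul]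
  | tmul a b =>
    induction x with
    | zero => simp
    | add x y hx hy => rw [mul_add, map_add, hx, hy, map_add, mul_add]
    | tmul c d =>
      rw [Algebra.TensorProduct.tmul_pow, Algebra.TensorProduct.tmul_mul_tmul, hχ, hφ, hψ, hχ,
        Algebra.TensorProduct.tmul_mul_tmul]

theorem FrobeniusSplit.tensorProduct (hA : FrobeniusSplit p A) (hB : FrobeniusSplit p B) :
    FrobeniusSplit p (A ⊗[k] B) := by
  obtain ⟨α, hα, hα1⟩ := hA
  obtain ⟨β, hβ, hβ1⟩ := hB
  obtain ⟨χ, hχ, hχt⟩ := exists_cartierMap_tmul (k := k) hα hβ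
  exact ⟨χ, hχ, by rw [Algebra.TensorProduct.one_def, hχt, hα1, hβ1]⟩

theorem HasFrobeniusDualBasis.tmul {a : A} {b : B} (ha : HasFrobeniusDualBasis p e a)
    (hb : HasFrobeniusDualBasis p e b) : HasFrobeniusDualBasis p e (a ⊗ₜ[k] b) := by
  obtain ⟨ι, _, u, π, hπ, hu⟩ := ha
  obtain ⟨κ, _, v, ρ, hρ, hv⟩ := hb
  choose χ hχ hχt using fun i j => exists_cartierMap_tmul (k := k) (hπ i) (hρ j)
  refine ⟨ι × κ, inferInstance, fun ij => u ij.1 ⊗ₜ v ij.2, fun ij => χ ij.1 ij.2,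
    fun ij => hχ ij.1 ij.2, fun x => ?_⟩
  induction x with
  | zero => simp [zero_pow (pow_ne_zero e (expChar_pos k p).ne')]
  | add x y hx hy =>
    simp only [mul_add, hx, hy, map_add, add_pow_expChar_pow, add_mul, Finset.sum_add_distrib]
  | tmul x y =>
    simp only [Algebra.TensorProduct.tmul_mul_tmul, hu, hv, TensorProduct.sum_tmul,
      TensorProduct.tmul_sum, Fintype.sum_prod_type_right, hχt, Algebra.TensorProduct.tmul_pow]

theorem exists_cartierMap_apply_eq_tmul [IsDomain A] [IsDomain B] [IsNoetherianRing (A ⊗[k] B)]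
    (hp : 1 < p) (hFA : FFinite p A) (hFB : FFinite p B) (hsplit : FrobeniusSplit p (A ⊗[k] B))
    {c : A ⊗[k] B} (hc : ∀ P ∈ minimalPrimes (A ⊗[k] B), c ∉ P) :
    ∃ e, ∃ φ ∈ cartierMaps p e (A ⊗[k] B), ∃ a b, a ≠ 0 ∧ b ≠ 0 ∧ φ c = a ⊗ₜ b := by
  let T : Submonoid (A ⊗[k] B) :=
    A⁰.map (Algebra.TensorProduct.includeLeft : A →ₐ[k] A ⊗[k] B) ⊔
      B⁰.map (Algebra.TensorProduct.includeRight : B →ₐ[k] A ⊗[k] B)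
  have hT (x : A ⊗[k] B) : x ∈ T ↔ ∃ a b, a ≠ 0 ∧ b ≠ 0 ∧ x = a ⊗ₜ b := by
    simp [T, Submonoid.mem_sup, eq_comm]
  have hdual (e : ℕ) : ∃ t ∈ T, HasFrobeniusDualBasis p e t := by
    obtain ⟨a, ha, hadual⟩ := hFA.exists_hasFrobeniusDualBasis e
    obtain ⟨b, hb, hbdual⟩ := hFB.exists_hasFrobeniusDualBasis e
    exact ⟨a ⊗ₜ b, (hT _).mpr ⟨a, b, ha, hb, rfl⟩, hadual.tmul hbdual⟩
  obtain ⟨e, φ, hφ, hφc⟩ := exists_cartierMap_apply_mem hp hsplit T hdual hc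
  exact ⟨e, φ, hφ, (hT _).mp hφc⟩

end TensorProduct

theorem tensor_product_strongly_F_regular_general
    (p : ℕ) [Fact p.Prime]
    (k : Type*) [Field k] [CharP k p] [PerfectRing k p]
    (A B : Type*) [CommRing A] [CommRing B] [IsDomain A] [IsDomain B]
    [Algebra k A] [Algebra k B] [IsNoetherianRing (A ⊗[k] B)]
    (hFA : FFinite p A) (hFB : FFinite p B)
    (hA : StronglyFRegular p A) (hB : StronglyFRegular p B) :
    StronglyFRegular p (A ⊗[k] B) := by
  have : CharP (A ⊗[k] B) p :=
    charP_of_injective_algebraMap (algebraMap k (A ⊗[k] B)).injective p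
  have hp : p.Prime := Fact.out
  have hsplitA := hA.frobeniusSplit hFA
  have hsplitB := hB.frobeniusSplit hFB
  intro c hc
  obtain ⟨e, φ, hφ, a, b, ha, hb, hφc⟩ :=
    exists_cartierMap_apply_eq_tmul hp.one_lt hFA hFB (hsplitA.tensorProduct hsplitB) hc
  obtain ⟨m, hm⟩ := hA.exists_one_mem_cartierIdeal hFA ha
  obtain ⟨n, hn⟩ := hB.exists_one_mem_cartierIdeal hFB hb
  obtain ⟨α, hα, hαa⟩ :=
    hsplitA.monotone_cartierIdeal hp.ne_zero a (le_max_left (m + 1) (n + 1)) hm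
  obtain ⟨β, hβ, hβb⟩ :=
    hsplitB.monotone_cartierIdeal hp.ne_zero b (le_max_right (m + 1) (n + 1)) hn
  obtain ⟨χ, hχ, hχt⟩ := exists_cartierMap_tmul (k := k) hα hβ
  refine ⟨_, χ.comp φ, comp_mem_cartierMaps hχ hφ, ?_⟩
  rw [AddMonoidHom.comp_apply, hφc, hχt, hαa, hβb, Algebra.TensorProduct.one_def]

theorem tensor_product_strongly_F_regular
    (p : ℕ) [Fact p.Prime]
    (k : Type*) [Field k] [CharP k p] [PerfectRing k p]
    (A B : Type*) [CommRing A] [CommRing B] [IsDomain A] [IsDomain B]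
    [Algebra k A] [Algebra k B] [Algebra.FiniteType k A] [Algebra.FiniteType k B]
    (hA : StronglyFRegular p A) (hB : StronglyFRegular p B)
    [IsDomain (TensorProduct k A B)] :
    StronglyFRegular p (TensorProduct k A B) := by
  have : Algebra.FiniteType k (TensorProduct k A B) := .trans (S := A) inferInstance inferInstance
  have : IsNoetherianRing (TensorProduct k A B) := Algebra.FiniteType.isNoetherianRing k _
  exact tensor_product_strongly_F_regular_general p k A B (.of_finiteType k) (.of_finiteType k)
    hA hB
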